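/- For every complex number q with 0 < |q| < 1, one has ∑_{i,j,k,l ≥ 0} q^{i²+j²+k²+l²+il−jl−kl} / ((q²;q²)_i (q²;q²)_j (q²;q²)_k (q²;q²)_l) = J_2⁶ J_14 J_28⁵ / (J_1³ J_4³ J_{2,28} J_{3,28} J_{7,28} J_{8,28} J_{11,28} J_{12,28}) + 4q · J_4³ J_{8,28} / J_2⁴. -/

import Mathlib

open scoped BigOperators

/-- The infinite q-Pochhammer symbol `(a; q)_∞ = ∏_{k=0}^∞ (1 - a q^k)`. -/
noncomputable def qPochInf (a q : ℂ) : ℂ := ∏' n : ℕ, (1 - a * q ^ n)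

/-- The finite q-Pochhammer symbol `(a; q)_n = ∏_{k=0}^{n-1} (1 - a q^k)`. -/
noncomputable def qPoch (a q : ℂ) (n : ℕ) : ℂ :=
  Finset.prod (Finset.range n) (fun k => 1 - a * q ^ k)

/-- `J_m = (q^m; q^m)_∞`. -/
noncomputable def J (q : ℂ) (m : ℕ) : ℂ := qPochInf (q ^ m) (q ^ m)

/-- `J_{a,m} = (q^a; q^m)_∞ (q^{m-a}; q^m)_∞ (q^m; q^m)_∞`. -/
noncomputable def Jam (q : ℂ) (a m : ℕ) : ℂ :=
  qPochInf (q ^ a) (q ^ m) * qPochInf (q ^ (m - a)) (q ^ m) * qPochInf (q ^ m) (q ^ m)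


open Filter Topology

noncomputable def iq (q : ℂ) (n : ℤ) : ℂ := if n < 0 then 0 else 1 / qPoch q q n.toNat

theorem qpoch_tendsto (a q : ℂ) (h1 : ‖q‖ < 1) :
    Tendsto (fun n => qPoch a q n) atTop (𝓝 (qPochInf a q)) := by
  have hs : Summable (fun n : ℕ => ‖-(a * q ^ n)‖) := by
    simp only [norm_neg, norm_mul, norm_pow]
    exact (summable_geometric_of_lt_one (norm_nonneg q) h1).mul_left _
  have := (multipliable_one_add_of_summable hs).tendsto_prod_tprod_nat
  simpa [qPoch, qPochInf, sub_eq_add_neg] using this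

theorem qpochInf_ne_zero (a q : ℂ) (h1 : ‖q‖ < 1) (h : ∀ n : ℕ, 1 - a * q ^ n ≠ 0) :
    qPochInf a q ≠ 0 := by
  have hs : Summable (fun n : ℕ => ‖-(a * q ^ n)‖) := by
    simp only [norm_neg, norm_mul, norm_pow]
    exact (summable_geometric_of_lt_one (norm_nonneg q) h1).mul_left _
  have := tprod_one_add_ne_zero_of_summable (f := fun n : ℕ => -(a * q ^ n))
    (by intro i; rw [← sub_eq_add_neg]; exact h i) hs
  simpa [qPochInf, sub_eq_add_neg] using this

theorem one_sub_ne (x : ℂ) (h : ‖x‖ < 1) : 1 - x ≠ 0 := by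
  intro h2
  have : x = 1 := by linear_combination -h2
  rw [this] at h; simp at h

theorem npow_lt {q : ℂ} (h1 : ‖q‖ < 1) {n : ℕ} (hn : n ≠ 0) : ‖q ^ n‖ < 1 := by
  rw [norm_pow]; exact pow_lt_one₀ (norm_nonneg _) h1 hn

theorem qpochInf_ne_zero' (a q : ℂ) (ha : ‖a‖ < 1) (h1 : ‖q‖ < 1) : qPochInf a q ≠ 0 := by
  apply qpochInf_ne_zero a q h1
  intro n
  apply one_sub_ne
  rw [norm_mul, norm_pow]
  calc ‖a‖ * ‖q‖ ^ n ≤ ‖a‖ * 1 := by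
        gcongr; exact pow_le_one₀ (norm_nonneg _) h1.le
    _ < 1 := by simpa

theorem qpoch_ne_zero (q : ℂ) (h1 : ‖q‖ < 1) (n : ℕ) : qPoch q q n ≠ 0 := by
  unfold qPoch
  rw [Finset.prod_ne_zero_iff]
  intro k _
  rw [← pow_succ']
  exact one_sub_ne _ (npow_lt h1 (by omega))

theorem qpoch_succ (a q : ℂ) (n : ℕ) : qPoch a q (n+1) = qPoch a q n * (1 - a * q^n) := by
  simp [qPoch, Finset.prod_range_succ]

theorem qpoch_zero (a q : ℂ) : qPoch a q 0 = 1 := by simp [qPoch]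

theorem iq_nat (q : ℂ) (n : ℕ) : iq q n = 1 / qPoch q q n := by simp [iq]

theorem iq_neg (q : ℂ) (n : ℤ) (h : n < 0) : iq q n = 0 := by simp [iq, h]

theorem iq_zero (q : ℂ) : iq q 0 = 1 := by simp [iq, qPoch]

theorem iq_step (q : ℂ) (h1 : ‖q‖ < 1) (n : ℤ) : iq q (n - 1) = (1 - q ^ n) * iq q n := by
  rcases lt_trichotomy n 0 with h | h | h
  · rw [iq_neg _ _ h, iq_neg _ _ (by omega)]; simp
  · subst h; rw [iq_neg _ _ (by omega)]; simp
  · obtain ⟨m, rfl⟩ : ∃ m : ℕ, n = (m : ℤ) + 1 := ⟨(n-1).toNat, by omega⟩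
    have e : ((m : ℤ) + 1) = ((m + 1 : ℕ) : ℤ) := by push_cast; rfl
    rw [add_sub_cancel_right, e, iq_nat, iq_nat, zpow_natCast, qpoch_succ]
    have h2 := qpoch_ne_zero q h1 m
    have h3 : 1 - q ^ (m+1) ≠ 0 := one_sub_ne _ (npow_lt h1 (by omega))
    rw [← pow_succ']
    field_simp

theorem iq_bdd (q : ℂ) (h1 : ‖q‖ < 1) : ∃ K : ℝ, 0 < K ∧ ∀ n : ℤ, ‖iq q n‖ ≤ K := by
  have ht := (qpoch_tendsto q q h1).inv₀ (qpochInf_ne_zero' q q h1 h1)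
  obtain ⟨K, hK⟩ := (Metric.isBounded_range_of_tendsto _ ht).exists_norm_le
  refine ⟨max K 1, by positivity, fun n => ?_⟩
  by_cases h : n < 0
  · rw [iq_neg _ _ h]; simp
  · obtain ⟨m, rfl⟩ : ∃ m : ℕ, n = (m : ℤ) := ⟨n.toNat, by omega⟩
    rw [iq_nat, one_div]
    exact (hK _ ⟨m, rfl⟩).trans (le_max_left _ _)

theorem iq_tendsto (q : ℂ) (h1 : ‖q‖ < 1) :
    Tendsto (fun m : ℕ => iq q m) atTop (𝓝 (1 / qPochInf q q)) := by
  have ht := (qpoch_tendsto q q h1).inv₀ (qpochInf_ne_zero' q q h1 h1)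
  simp only [iq_nat, one_div]; exact ht

/-- summability of r^(Q n) over ℤ -/
theorem summ_z (r : ℝ) (h0 : 0 < r) (h1 : r < 1) (Q : ℤ → ℤ) (K : ℤ)
    (hQ : ∀ n, |n| - K ≤ Q n) : Summable (fun n : ℤ => r ^ (Q n)) := by
  have hs : Summable (fun n : ℤ => r ^ |n|) := by
    apply Summable.of_nat_of_neg
    · simpa using summable_geometric_of_lt_one h0.le h1
    · simpa using summable_geometric_of_lt_one h0.le h1
  refine Summable.of_nonneg_of_le (fun n => by positivity) (fun n => ?_) (hs.mul_left (r ^ (-K)))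
  rw [← zpow_add₀ h0.ne']
  exact zpow_le_zpow_right_of_le_one₀ h0 h1.le (by linarith [hQ n])

theorem quad_bd (a n : ℤ) : |n| - (|a|+1)^2 ≤ n^2 + a * n := by
  have h : -(|a| * |n|) ≤ a * n := by rw [← abs_mul]; exact neg_abs_le _
  have : n^2 = |n|^2 := (sq_abs n).symm
  nlinarith [sq_nonneg (|n| - (|a|+1)), abs_nonneg a, abs_nonneg n]

theorem summ_quad (r : ℝ) (h0 : 0 < r) (h1 : r < 1) (a : ℤ) :
    Summable (fun n : ℤ => r ^ (n^2 + a*n)) :=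
  summ_z r h0 h1 _ _ (quad_bd a)

theorem tsum_int_nat (f : ℤ → ℂ) (hf : ∀ n, n < 0 → f n = 0) :
    ∑' n : ℤ, f n = ∑' n : ℕ, f n := by
  symm
  apply Function.Injective.tsum_eq Nat.cast_injective
  intro n hn
  by_cases h : n < 0
  · exact absurd (hf n h) hn
  · exact ⟨n.toNat, by simp; omega⟩

theorem tsum_shift (f : ℤ → ℂ) (k : ℤ) : ∑' n : ℤ, f (n + k) = ∑' n : ℤ, f n :=
  (Equiv.addRight k).tsum_eq f


noncomputable def TT (q : ℂ) (m c : ℤ) : ℂ := ∑' n : ℤ, q ^ (n^2 + c*n) * iq q n * iq q (n+m)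

theorem summ_gen (q : ℂ) (h0 : q ≠ 0) (h1 : ‖q‖ < 1) (c : ℤ) (f : ℤ → ℂ) (K : ℝ)
    (hf : ∀ n, ‖f n‖ ≤ K) : Summable (fun n : ℤ => ‖q ^ (n^2 + c*n) * f n‖) := by
  have h0' : 0 < ‖q‖ := norm_pos_iff.mpr h0
  refine Summable.of_nonneg_of_le (fun n => norm_nonneg _) (fun n => ?_)
    ((summ_quad ‖q‖ h0' h1 c).mul_left K)
  rw [norm_mul, norm_zpow, mul_comm]
  gcongr
  exact hf n

theorem summ_TT (q : ℂ) (h0 : q ≠ 0) (h1 : ‖q‖ < 1) (m c k : ℤ) :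
    Summable (fun n : ℤ => q ^ (n^2 + c*n) * iq q (n+k) * iq q (n+m)) := by
  obtain ⟨K, hK, hb⟩ := iq_bdd q h1
  have := summ_gen q h0 h1 c (fun n => iq q (n+k) * iq q (n+m)) (K*K) (fun n => by
    rw [norm_mul]; gcongr <;> apply hb)
  simpa only [mul_assoc] using this.of_norm

theorem TT_rec1 (q : ℂ) (h0 : q ≠ 0) (h1 : ‖q‖ < 1) (m : ℤ) :
    TT q m m = TT q m (m+1) + q^(m+1) * TT q (m+1) (m+2) := by
  have e : ∀ n : ℤ, q ^ (n^2 + m*n) * iq q n * iq q (n+m)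
      = q ^ (n^2 + (m+1)*n) * iq q n * iq q (n+m)
        + q ^ (n^2 + m*n) * iq q (n-1) * iq q (n+m) := by
    intro n
    rw [iq_step q h1 n, show n^2 + (m+1)*n = n^2 + m*n + n by ring, zpow_add₀ h0 (n^2+m*n)]
    ring
  have s1 := summ_TT q h0 h1 m (m+1) 0
  have s2 := summ_TT q h0 h1 m m (-1)
  simp only [add_zero, ← sub_eq_add_neg] at s1 s2
  unfold TT
  rw [tsum_congr e, s1.tsum_add s2, ← tsum_shift _ 1, ← tsum_mul_left,
    tsum_shift (fun n => q ^ (n^2 + (m+1)*n) * iq q n * iq q (n+m)) 1,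
    ← tsum_shift (fun n => q ^ (n^2 + m*n) * iq q (n-1) * iq q (n+m)) 1]
  congr 1
  apply tsum_congr
  intro n
  rw [show (n+1)^2 + m*(n+1) = (m+1) + (n^2+(m+2)*n) by ring, zpow_add₀ h0 (m+1),
    add_sub_cancel_right, show n+1+m = n+(m+1) by ring]
  ring

theorem TT_rec2 (q : ℂ) (h0 : q ≠ 0) (h1 : ‖q‖ < 1) (m : ℤ) :
    TT q (m+1) (m+1) = TT q m (m+1) + q^(m+1) * TT q (m+1) (m+2) := by
  have e : ∀ n : ℤ, q ^ (n^2 + (m+1)*n) * iq q n * iq q (n+(m+1))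
      = q ^ (n^2 + (m+1)*n) * iq q n * iq q (n+m)
        + q^(m+1) * (q ^ (n^2 + (m+2)*n) * iq q n * iq q (n+(m+1))) := by
    intro n
    have := iq_step q h1 (n+(m+1))
    rw [show n + (m+1) - 1 = n + m by ring] at this
    rw [this, show n^2 + (m+2)*n = n^2 + (m+1)*n + n by ring, zpow_add₀ h0 (n^2+(m+1)*n),
      zpow_add₀ h0 n]
    ring
  have s1 := summ_TT q h0 h1 m (m+1) 0
  have s2 := summ_TT q h0 h1 (m+1) (m+2) 0
  simp only [add_zero] at s1 s2
  unfold TT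
  rw [tsum_congr e, s1.tsum_add (s2.mul_left _), tsum_mul_left]

theorem TT_const (q : ℂ) (h0 : q ≠ 0) (h1 : ‖q‖ < 1) (m : ℤ) : TT q m m = TT q 0 0 := by
  have h : ∀ m, TT q (m+1) (m+1) = TT q m m := fun m => by
    rw [TT_rec1 q h0 h1 m, TT_rec2 q h0 h1 m]
  induction m using Int.induction_on with
  | zero => rfl
  | succ n ih => rw [h, ih]
  | pred n ih => rw [← h, ← ih]; simp

theorem TT_lim (q : ℂ) (h0 : q ≠ 0) (h1 : ‖q‖ < 1) :
    Tendsto (fun m : ℕ => TT q m m) atTop (𝓝 (1 / qPochInf q q)) := by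
  have h0' : 0 < ‖q‖ := norm_pos_iff.mpr h0
  obtain ⟨K, hK, hb⟩ := iq_bdd q h1
  have := tendsto_tsum_of_dominated_convergence (𝓕 := (atTop : Filter ℕ))
    (f := fun (m : ℕ) (n : ℤ) => q ^ (n^2 + (m:ℤ)*n) * iq q n * iq q (n+m))
    (g := fun n : ℤ => if n = 0 then 1 / qPochInf q q else 0)
    (bound := fun n => (K * K) * ‖q‖ ^ (n^2 + 0 * n))
    ((summ_quad ‖q‖ h0' h1 0).mul_left _) ?_ ?_
  · rw [tsum_ite_eq] at this
    exact this
  · intro n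
    rcases lt_trichotomy n 0 with h | h | h
    · simp only [iq_neg q n h, h.ne, if_false, mul_zero, zero_mul]
      exact tendsto_const_nhds
    · subst h
      simpa [iq_zero] using iq_tendsto q h1
    · simp only [h.ne', if_false]
      have hq : ‖q ^ n‖ < 1 := by
        obtain ⟨k, rfl⟩ : ∃ k : ℕ, n = k := ⟨n.toNat, by omega⟩
        rw [zpow_natCast]; exact npow_lt h1 (by omega)
      have h3 : Tendsto (fun m : ℕ => K * K * ‖q ^ (n^2)‖ * ‖q^n‖ ^ m) atTop (𝓝 0) := by
        simpa using (tendsto_pow_atTop_nhds_zero_of_lt_one (norm_nonneg _) hq).const_mul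
          (K * K * ‖q ^ (n^2)‖)
      refine squeeze_zero_norm (fun m => ?_) h3
      rw [zpow_add₀ h0, norm_mul, norm_mul, norm_mul, mul_comm (m:ℤ), zpow_mul, zpow_natCast,
        norm_pow]
      calc _ ≤ ‖q ^ n ^ 2‖ * ‖q ^ n‖ ^ m * K * K := by gcongr <;> apply hb
        _ = _ := by ring
  · refine Eventually.of_forall (fun m n => ?_)
    by_cases h : n < 0
    · rw [iq_neg q n h]; simp; positivity
    · rw [norm_mul, norm_mul, norm_zpow]
      have : ‖q‖ ^ (n^2 + (m:ℤ)*n) ≤ ‖q‖ ^ (n^2 + 0*n) := by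
        apply zpow_le_zpow_right_of_le_one₀ h0' h1.le
        have : 0 ≤ (m:ℤ)*n := mul_nonneg (by positivity) (by omega)
        linarith
      calc _ ≤ ‖q‖ ^ (n^2 + 0*n) * K * K := by gcongr <;> apply hb
        _ = _ := by ring

theorem TT_eq (q : ℂ) (h0 : q ≠ 0) (h1 : ‖q‖ < 1) (m : ℤ) : TT q m m = 1 / qPochInf q q := by
  have h := TT_lim q h0 h1
  simp only [TT_const q h0 h1] at h
  rw [TT_const q h0 h1, ← tendsto_nhds_unique h tendsto_const_nhds]

/-- Euler -/
noncomputable def EE (q z : ℂ) : ℂ := ∑' n : ℤ, q ^ (n^2) * z ^ n * iq (q^2) n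

theorem sq_lt {q : ℂ} (h1 : ‖q‖ < 1) : ‖q^2‖ < 1 := npow_lt h1 (by omega)

theorem summ_theta (r t : ℝ) (h0 : 0 < r) (h1 : r < 1) (ht : 0 < t) :
    Summable (fun n : ℤ => r ^ (n^2) * t ^ n) := by
  obtain ⟨c, hc1, hc2⟩ : ∃ c : ℕ, r ^ c < t ∧ r ^ c < t⁻¹ := by
    have := tendsto_pow_atTop_nhds_zero_of_lt_one h0.le h1
    exact ((this.eventually (eventually_lt_nhds ht)).and
      (this.eventually (eventually_lt_nhds (inv_pos.mpr ht)))).exists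
  have hb : ∀ n : ℤ, t ^ n ≤ r ^ (-(c:ℤ) * |n|) := by
    intro n
    have hr : 0 < r ^ c := by positivity
    rcases le_total 0 n with h | h
    · rw [abs_of_nonneg h]
      obtain ⟨k, rfl⟩ : ∃ k : ℕ, n = k := ⟨n.toNat, by omega⟩
      rw [zpow_mul, zpow_natCast, zpow_natCast, zpow_neg, zpow_natCast]
      gcongr
      exact ((lt_inv_comm₀ hr ht).mp hc2).le
    · rw [abs_of_nonpos h]
      obtain ⟨k, rfl⟩ : ∃ k : ℕ, n = -k := ⟨(-n).toNat, by omega⟩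
      rw [neg_neg, zpow_mul, zpow_natCast, zpow_neg, zpow_natCast, ← inv_pow, zpow_neg, zpow_natCast]
      gcongr
  refine Summable.of_nonneg_of_le (fun n => by positivity) (fun n => ?_)
    (summ_z r h0 h1 (fun n => n^2 + -(c:ℤ) * |n|) ((|(-(c:ℤ))|+1)^2) (fun n => ?_))
  · rw [zpow_add₀ h0.ne']
    gcongr
    exact hb n
  · have := quad_bd (-(c:ℤ)) |n|
    rw [abs_abs, sq_abs] at this
    exact this

theorem summ_EE (q z : ℂ) (h0 : q ≠ 0) (h1 : ‖q‖ < 1) (hz : z ≠ 0) (k : ℤ) :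
    Summable (fun n : ℤ => ‖q ^ (n^2) * z ^ n * iq (q^2) (n+k)‖) := by
  have h0' : 0 < ‖q‖ := norm_pos_iff.mpr h0
  obtain ⟨K, hK, hb⟩ := iq_bdd (q^2) (sq_lt h1)
  refine Summable.of_nonneg_of_le (fun n => norm_nonneg _) (fun n => ?_)
    ((summ_theta ‖q‖ ‖z‖ h0' h1 (norm_pos_iff.mpr hz)).mul_right K)
  rw [norm_mul, norm_mul, norm_zpow, norm_zpow]
  gcongr
  apply hb

theorem EE_rec (q z : ℂ) (h0 : q ≠ 0) (h1 : ‖q‖ < 1) (hz : z ≠ 0) :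
    EE q z = (1 + z * q) * EE q (z * q^2) := by
  have e : ∀ n : ℤ, q ^ (n^2) * z ^ n * iq (q^2) n = q ^ (n^2) * (z * q^2) ^ n * iq (q^2) n
      + q ^ (n^2) * z ^ n * iq (q^2) (n-1) := by
    intro n
    rw [iq_step (q^2) (sq_lt h1) n, mul_zpow]
    ring
  have s1 := (summ_EE q (z*q^2) h0 h1 (by simp [hz, h0]) 0).of_norm
  have s2 := (summ_EE q z h0 h1 hz (-1)).of_norm
  simp only [add_zero, ← sub_eq_add_neg] at s1 s2
  unfold EE
  rw [tsum_congr e, s1.tsum_add s2, add_mul, one_mul,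
    ← tsum_shift (fun n => q ^ (n^2) * z ^ n * iq (q^2) (n-1)) 1, ← tsum_mul_left]
  congr 1
  apply tsum_congr
  intro n
  rw [show (n+1)^2 = n^2 + 2 * n + 1 by ring, zpow_add₀ h0, zpow_add₀ h0, zpow_add₀ hz,
    mul_zpow, add_sub_cancel_right, zpow_mul]
  simp only [zpow_ofNat]
  ring

theorem EE_iter (q z : ℂ) (h0 : q ≠ 0) (h1 : ‖q‖ < 1) (hz : z ≠ 0) (N : ℕ) :
    EE q z = qPoch (-(z*q)) (q^2) N * EE q (z * (q^2)^N) := by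
  induction N with
  | zero => simp [qpoch_zero]
  | succ n ih =>
    rw [ih, qpoch_succ, EE_rec q (z * (q^2)^n) h0 h1 (by simp [hz, h0]),
      show z * (q^2)^n * q^2 = z * (q^2)^(n+1) by ring]
    ring

theorem EE_lim (q z : ℂ) (h0 : q ≠ 0) (h1 : ‖q‖ < 1) (hz : z ≠ 0) :
    Tendsto (fun N : ℕ => EE q (z * (q^2)^N)) atTop (𝓝 1) := by
  have h0' : 0 < ‖q‖ := norm_pos_iff.mpr h0
  have hs := summ_EE q z h0 h1 hz 0
  simp only [add_zero] at hs
  have := tendsto_tsum_of_dominated_convergence (𝓕 := (atTop : Filter ℕ))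
    (f := fun (N : ℕ) (n : ℤ) => q ^ (n^2) * (z * (q^2)^N) ^ n * iq (q^2) n)
    (g := fun n : ℤ => if n = 0 then 1 else 0) hs ?_ ?_
  · rw [tsum_ite_eq] at this
    exact this
  · intro n
    rcases lt_trichotomy n 0 with h | h | h
    · simp only [iq_neg _ n h, h.ne, if_false, mul_zero]
      exact tendsto_const_nhds
    · subst h
      simp [iq_zero]
    · simp only [h.ne', if_false]
      obtain ⟨k, rfl⟩ : ∃ k : ℕ, n = k := ⟨n.toNat, by omega⟩
      have hq : ‖(q^2) ^ k‖ < 1 := npow_lt (sq_lt h1) (by omega)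
      have h3 := (tendsto_pow_atTop_nhds_zero_of_norm_lt_one hq).const_mul
          (q ^ ((k:ℤ)^2) * z ^ k * iq (q^2) k)
      rw [mul_zero] at h3
      refine h3.congr (fun N => ?_)
      rw [zpow_natCast, mul_pow, ← pow_mul, ← pow_mul, ← pow_mul, ← pow_mul]
      ring
  · refine Eventually.of_forall (fun N n => ?_)
    by_cases h : n < 0
    · rw [iq_neg _ n h]; simp
    · obtain ⟨k, rfl⟩ : ∃ k : ℕ, n = k := ⟨n.toNat, by omega⟩
      rw [norm_mul, norm_mul, norm_mul, norm_mul, mul_zpow, norm_mul]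
      have : ‖((q^2)^N)^(k:ℤ)‖ ≤ 1 := by
        rw [zpow_natCast, norm_pow, norm_pow]
        exact pow_le_one₀ (by positivity) (pow_le_one₀ (by positivity) (sq_lt h1).le)
      calc _ ≤ ‖q ^ (k:ℤ) ^ 2‖ * (‖z ^ (k:ℤ)‖ * 1) * ‖iq (q ^ 2) ↑k‖ := by gcongr
        _ = _ := by ring

theorem EE_eq (q z : ℂ) (h0 : q ≠ 0) (h1 : ‖q‖ < 1) (hz : z ≠ 0) :
    EE q z = qPochInf (-(z*q)) (q^2) := by
  have h := (qpoch_tendsto (-(z*q)) (q^2) (sq_lt h1)).mul (EE_lim q z h0 h1 hz)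
  simp only [← EE_iter q z h0 h1 hz, mul_one] at h
  exact tendsto_nhds_unique tendsto_const_nhds h

/-- Jacobi triple product -/
theorem jtp (q z : ℂ) (h0 : q ≠ 0) (h1 : ‖q‖ < 1) (hz : z ≠ 0) :
    ∑' r : ℤ, q ^ (r^2) * z ^ r
      = qPochInf (q^2) (q^2) * qPochInf (-(z*q)) (q^2) * qPochInf (-(z⁻¹*q)) (q^2) := by
  have hP := qpochInf_ne_zero' (q^2) (q^2) (sq_lt h1) (sq_lt h1)
  have hz' : z⁻¹ ≠ 0 := inv_ne_zero hz
  have s1 := summ_EE q z h0 h1 hz 0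
  have s2 := summ_EE q z⁻¹ h0 h1 hz' 0
  simp only [add_zero] at s1 s2
  have hm := tsum_mul_tsum_of_summable_norm s1 s2
  have hsum := (summable_mul_of_summable_norm s1 s2)
  let e : ℤ × ℤ ≃ ℤ × ℤ :=
    { toFun := fun p => (p.2 + p.1, p.2)
      invFun := fun p => (p.1 - p.2, p.2)
      left_inv := fun p => by simp
      right_inv := fun p => by simp }
  have hm2 := hm.trans ((e.tsum_eq _).symm.trans ((e.summable_iff).mpr hsum).tsum_prod)
  have h3 : ∀ r b : ℤ, q ^ ((b+r)^2) * z ^ (b+r) * iq (q^2) (b+r) *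
      (q ^ (b^2) * z⁻¹ ^ b * iq (q^2) b)
      = (q ^ (r^2) * z ^ r) * ((q^2) ^ (b^2 + r * b) * iq (q^2) b * iq (q^2) (b+r)) := by
    intro r b
    rw [show (q^2) ^ (b^2 + r*b) = q ^ (2 * (b^2 + r*b)) by rw [zpow_mul]; norm_cast,
      zpow_add₀ hz, inv_zpow,
      show (b+r)^2 = r^2 + 2 * (b^2 + r*b) + (-b^2) by ring, zpow_add₀ h0, zpow_add₀ h0, zpow_neg]
    have : z ^ b ≠ 0 := zpow_ne_zero _ hz
    have : q ^ (b^2) ≠ 0 := zpow_ne_zero _ h0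
    field_simp
  have h4 : ∀ r : ℤ, ∑' b : ℤ, q ^ ((b+r)^2) * z ^ (b+r) * iq (q^2) (b+r) *
      (q ^ (b^2) * z⁻¹ ^ b * iq (q^2) b) = (q ^ (r^2) * z ^ r) * (1 / qPochInf (q^2) (q^2)) := by
    intro r
    rw [tsum_congr (h3 r), tsum_mul_left, ← TT_eq (q^2) (pow_ne_zero _ h0) (sq_lt h1) r]
    rfl
  have h5 := hm2.trans (tsum_congr h4)
  rw [tsum_mul_right] at h5
  change EE q z * EE q z⁻¹ = _ at h5
  rw [EE_eq q z h0 h1 hz, EE_eq q _ h0 h1 hz'] at h5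
  rw [mul_assoc, h5]
  field_simp


theorem summ_icc (f : ℤ → ℂ) (a b : ℤ) (h : ∀ r, r < a ∨ b < r → f r = 0) : Summable f := by
  apply summable_of_ne_finset_zero (s := Finset.Icc a b)
  intro r hr
  apply h
  rw [Finset.mem_Icc] at hr
  omega

theorem telesc (F1 F2 G : ℤ → ℂ) (c : ℂ) (h1 : Summable F1) (h2 : Summable F2) (hG : Summable G)
    (h : ∀ r, c * F1 r - F2 r = G (r+1) - G r) : c * ∑' r, F1 r = ∑' r, F2 r := by
  have hG' : Summable (fun r => G (r+1)) := (Equiv.addRight (1:ℤ)).summable_iff.mpr hG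
  have e : ∑' r, (c * F1 r - F2 r) = ∑' r, (G (r+1) - G r) := tsum_congr h
  rw [(h1.mul_left c).tsum_sub h2, hG'.tsum_sub hG, tsum_shift, sub_self, tsum_mul_left] at e
  exact sub_eq_zero.mp e

theorem bailey (Q : ℂ) (h0 : Q ≠ 0) (h1 : ‖Q‖ < 1) (α : ℤ → ℂ) (hα : Summable (fun r => ‖α r‖))
    (u : ℤ → ℤ) (c : ℤ) :
    ∑' n : ℤ, Q ^ (n^2 + c*n) * ∑' r : ℤ, α r * iq Q (n - u r) * iq Q (n + (u r + c))
      = (∑' r : ℤ, α r * Q ^ ((u r)^2 + c * u r)) / qPochInf Q Q := by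
  have h0' : 0 < ‖Q‖ := norm_pos_iff.mpr h0
  obtain ⟨K, hK, hb⟩ := iq_bdd Q h1
  have hs : Summable (Function.uncurry (fun (n r : ℤ) =>
      Q ^ (n^2 + c*n) * (α r * iq Q (n - u r) * iq Q (n + (u r + c))))) := by
    have := (Summable.mul_of_nonneg (summ_quad ‖Q‖ h0' h1 c) hα
      (fun n => by positivity) (fun n => by positivity)).mul_right (K*K)
    refine Summable.of_norm_bounded this (fun p => ?_)
    simp only [Function.uncurry]
    rw [norm_mul, norm_mul, norm_mul, norm_zpow]
    calc _ ≤ ‖Q‖ ^ (p.1 ^ 2 + c * p.1) * (‖α p.2‖ * K * K) := by gcongr <;> apply hb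
      _ = _ := by ring
  simp only [← tsum_mul_left]
  rw [← hs.tsum_comm, div_eq_mul_one_div, ← tsum_mul_right]
  apply tsum_congr
  intro r
  rw [← tsum_shift _ (u r), ← TT_eq Q h0 h1 (2 * u r + c)]
  unfold TT
  rw [← tsum_mul_left]
  apply tsum_congr
  intro n
  rw [show (n + u r)^2 + c * (n + u r) = ((u r)^2 + c * u r) + (n^2 + (2 * u r + c) * n) by ring,
    zpow_add₀ h0 ((u r)^2 + c * u r), add_sub_cancel_right,
    show n + u r + (u r + c) = n + (2 * u r + c) by ring]
  ring

noncomputable def S1 (w : ℂ) (n : ℤ) : ℂ :=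
  ∑' r : ℤ, ((-1) ^ r * w ^ (3*r^2 - r) * (1 + w ^ (2*r))) * iq (w^4) (n - r) * iq (w^4) (n + (r + 0))

theorem S1_summ (w : ℂ) (n : ℤ) : Summable (fun r : ℤ =>
    ((-1) ^ r * w ^ (3*r^2 - r) * (1 + w ^ (2*r))) * iq (w^4) (n - r) * iq (w^4) (n + (r + 0))) := by
  apply summ_icc _ (-n) n
  rintro r (h | h)
  · rw [iq_neg _ (n + (r+0)) (by omega)]; simp
  · rw [iq_neg _ (n - r) (by omega)]; simp

theorem S1_rec (w : ℂ) (h0 : w ≠ 0) (h1 : ‖w‖ < 1) (n : ℤ) :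
    ((1 - w ^ (8*n)) * (1 + w ^ (4*n-2))) * S1 w n = S1 w (n-1) := by
  have hP : ‖w^4‖ < 1 := npow_lt h1 (by omega)
  apply telesc _ _ (fun r : ℤ => (-1)^r * w ^ (3*r^2 - r) * (-(w^(4*n)) * (w^(-(4*r)) +
    (1 + w^(4*n-2)) * w^(-(2*r)) + w^(-2 : ℤ))) * iq (w^4) (n-r) * iq (w^4) (n+r-1)) _
    (S1_summ w n) (S1_summ w (n-1))
  · apply summ_icc _ (-n+1) n
    rintro r (h | h)
    · rw [iq_neg _ (n + r - 1) (by omega)]; simp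
    · rw [iq_neg _ (n - r) (by omega)]; simp
  · intro r
    have a1 := iq_step (w^4) hP (n-r)
    have a2 := iq_step (w^4) hP (n+r)
    simp only [add_zero]
    rw [show n - (r+1) = n - r - 1 by ring, show n - 1 - r = n - r - 1 by ring,
      show n - 1 + r = n + r - 1 by ring, show n + (r+1) - 1 = n + r by ring, a1, a2,
      show 3*(r+1)^2-(r+1) = 3*r^2 - r + (2*r+2*r+2*r) + 2 by ring,
      show 8*n = 2*n+2*n+2*n+2*n by ring, show 4*n-2 = 2*n+2*n-2 by ring, show 4*n=2*n+2*n by ring,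
      show -(4*(r+1)) = -(2*r) - 2*r - 4 by ring, show -(2*(r+1)) = -(2*r) - 2 by ring,
      show -(4*r) = -(2*r) - 2*r by ring]
    have b1 : (w^4) ^ (n-r) = w^(2*n) * w^(2*n) / (w^(2*r) * w^(2*r)) := by
      rw [← zpow_add₀ h0, ← zpow_add₀ h0, ← zpow_sub₀ h0, ← zpow_natCast w 4, ← zpow_mul]
      congr 1; push_cast; ring
    have b2 : (w^4) ^ (n+r) = w^(2*n) * w^(2*n) * (w^(2*r) * w^(2*r)) := by
      rw [← zpow_add₀ h0, ← zpow_add₀ h0, ← zpow_add₀ h0, ← zpow_natCast w 4, ← zpow_mul]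
      congr 1; push_cast; ring
    rw [b1, b2, zpow_add₀ (by norm_num : (-1:ℂ) ≠ 0)]
    simp only [zpow_add₀ h0, zpow_sub₀ h0, zpow_neg, zpow_one]
    have hx : w^(2*n) ≠ 0 := zpow_ne_zero _ h0
    have hy : w^(2*r) ≠ 0 := zpow_ne_zero _ h0
    generalize w^(2*n) = x at *
    generalize w^(2*r) = y at *
    simp only [zpow_ofNat]
    field_simp
    ring

theorem S1_zero (w : ℂ) : S1 w 0 = 2 := by
  unfold S1
  rw [tsum_eq_single 0]
  · simp [iq_zero]; norm_num
  · intro r hr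
    rcases lt_or_gt_of_ne hr with h | h
    · rw [iq_neg _ (0 + (r+0)) (by omega)]; simp
    · rw [iq_neg _ (0 - r) (by omega)]; simp

theorem S1_neg (w : ℂ) (n : ℤ) (hn : n < 0) : S1 w n = 0 := by
  unfold S1
  refine (tsum_congr (fun r => ?_)).trans tsum_zero
  by_cases h : n - r < 0
  · rw [iq_neg _ (n - r) h]; simp
  · rw [iq_neg _ (n + (r+0)) (by omega)]; simp

theorem S1_sum (w : ℂ) (h0 : w ≠ 0) (h1 : ‖w‖ < 1) :
    ∑' n : ℤ, (w^4) ^ (n^2) * S1 w n = 2 * (qPochInf (w^14) (w^14) * qPochInf (w^8) (w^14) *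
      qPochInf (w^6) (w^14)) / qPochInf (w^4) (w^4) := by
  have h0' : 0 < ‖w‖ := norm_pos_iff.mpr h0
  have hP : ‖w^4‖ < 1 := npow_lt h1 (by omega)
  have h7 : ‖w^7‖ < 1 := npow_lt h1 (by omega)
  have hm1 : ∀ r : ℤ, ‖(-1:ℂ)^r‖ = 1 := fun r => by rw [norm_zpow]; simp
  have e1 : ∀ (k : ℕ) (r : ℤ), (w^k)^r = w^((k:ℤ)*r) := fun k r => by
    rw [zpow_mul, zpow_natCast]
  have hα : Summable (fun r : ℤ => ‖(-1) ^ r * w ^ (3*r^2 - r) * (1 + w ^ (2*r))‖) := by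
    have s1 := summ_z ‖w‖ h0' h1 (fun r => 3*r^2-r) 1 (fun r => by
      nlinarith [sq_abs r, abs_nonneg r, le_abs_self r, sq_nonneg (|r|-1)])
    have s2 := summ_z ‖w‖ h0' h1 (fun r => 3*r^2+r) 1 (fun r => by
      nlinarith [sq_abs r, abs_nonneg r, neg_abs_le r, sq_nonneg (|r|-1)])
    refine Summable.of_nonneg_of_le (fun r => norm_nonneg _) (fun r => ?_) (s1.add s2)
    rw [norm_mul, norm_mul, hm1, one_mul, ← norm_zpow, ← norm_zpow, ← norm_mul, mul_add, mul_one,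
      ← zpow_add₀ h0, show 3*r^2-r+2*r = 3*r^2+r by ring]
    exact norm_add_le _ _
  have hb := bailey (w^4) (pow_ne_zero _ h0) hP _ hα (fun r => r) 0
  simp only [zero_mul, add_zero] at hb
  unfold S1
  simp only [add_zero]
  rw [hb]
  congr 1
  have t1 := jtp (w^7) (-w) (pow_ne_zero _ h0) h7 (neg_ne_zero.mpr h0)
  have t2 := jtp (w^7) (-w)⁻¹ (pow_ne_zero _ h0) h7 (inv_ne_zero (neg_ne_zero.mpr h0))
  have s1 := summ_theta ‖w^7‖ ‖-w‖ (by simpa using by positivity) h7 (by simpa using h0)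
  have s2 := summ_theta ‖w^7‖ ‖(-w)⁻¹‖ (by simpa using by positivity) h7 (by simpa using h0)
  have s1' : Summable (fun r : ℤ => (w^7)^(r^2) * (-w)^r) :=
    Summable.of_norm (by simpa only [norm_mul, norm_zpow] using s1)
  have s2' : Summable (fun r : ℤ => (w^7)^(r^2) * ((-w)⁻¹)^r) :=
    Summable.of_norm (by simpa only [norm_mul, norm_zpow] using s2)
  have c1 : -(-w * w^7) = w^8 := by ring
  have c2 : -((-w)⁻¹ * w^7) = w^6 := by field_simp
  have c3 : (w^7)^2 = w^14 := by ring
  rw [inv_inv, c1, c2, c3] at t2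
  rw [c1, c2, c3] at t1
  have : ∀ r : ℤ, (-1) ^ r * w ^ (3*r^2 - r) * (1 + w ^ (2*r)) * (w^4)^(r^2)
      = (w^7)^(r^2) * (-w)^r + (w^7)^(r^2) * ((-w)⁻¹)^r := by
    intro r
    rw [inv_zpow, ← zpow_neg, neg_eq_neg_one_mul w, mul_zpow, mul_zpow, e1, e1,
      zpow_neg (-1:ℂ), ← inv_zpow (-1:ℂ), show (-1:ℂ)⁻¹ = -1 by norm_num]
    rw [show w ^ (3*r^2 - r) = w^(3*r^2) * w^(-r) by rw [← zpow_add₀ h0]; congr 1,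
      show w ^ (((7:ℕ):ℤ)*r^2) = w^(3*r^2) * w^(((4:ℕ):ℤ)*r^2) by
        rw [← zpow_add₀ h0]; congr 1; push_cast; ring,
      show w ^ (2*r) = w^r * w^r by rw [← zpow_add₀ h0]; congr 1; ring, zpow_neg]
    have : w^r ≠ 0 := zpow_ne_zero _ h0
    field_simp
    ring
  rw [tsum_congr this, s1'.tsum_add s2', t1, t2]
  ring


noncomputable def S2 (q : ℂ) (n : ℤ) : ℂ :=
  ∑' s : ℤ, ((-1) ^ s * q ^ (3*s^2 + s)) * iq q (n - 2*s) * iq q (n + (2*s + 1))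

noncomputable def S2t (q : ℂ) (n : ℤ) : ℂ :=
  ∑' s : ℤ, ((-1) ^ s * q ^ (3*s^2 + s)) * (1 - q^(4*s+2)) * iq q (n - 2*s) * iq q (n + 2*s + 2)

theorem S2_summ (q : ℂ) (n : ℤ) : Summable (fun s : ℤ =>
    ((-1) ^ s * q ^ (3*s^2 + s)) * iq q (n - 2*s) * iq q (n + (2*s + 1))) := by
  apply summ_icc _ (-|n|-3) (|n|+3)
  have := abs_nonneg n
  have := le_abs_self n
  have := neg_abs_le n
  rintro r (h | h)
  · rw [iq_neg _ (n + (2*r+1)) (by omega)]; simp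
  · rw [iq_neg _ (n - 2*r) (by omega)]; simp

theorem S2t_summ (q : ℂ) (n : ℤ) : Summable (fun s : ℤ =>
    ((-1) ^ s * q ^ (3*s^2 + s)) * (1 - q^(4*s+2)) * iq q (n - 2*s) * iq q (n + 2*s + 2)) := by
  apply summ_icc _ (-|n|-3) (|n|+3)
  have := abs_nonneg n
  have := le_abs_self n
  have := neg_abs_le n
  rintro r (h | h)
  · rw [iq_neg _ (n + 2*r+2) (by omega)]; simp
  · rw [iq_neg _ (n - 2*r) (by omega)]; simp

theorem tsum_two (f : ℤ → ℂ) (hs : Summable f) :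
    2 * ∑' s : ℤ, f s = ∑' s : ℤ, (f s + f (-1 - s)) := by
  have hs' : Summable (fun s => f (-1 - s)) := (Equiv.subLeft (-1 : ℤ)).summable_iff.mpr hs
  have h2 : ∑' s, f (-1-s) = ∑' s, f s := (Equiv.subLeft (-1 : ℤ)).tsum_eq f
  rw [hs.tsum_add hs', h2, two_mul]

theorem S2_sym (q : ℂ) (h0 : q ≠ 0) (h1 : ‖q‖ < 1) (n : ℤ) : 2 * S2 q n = S2t q n := by
  unfold S2 S2t
  rw [tsum_two _ (S2_summ q n)]
  apply tsum_congr
  intro s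
  have a1 := iq_step q h1 (n-2*s)
  have a2 := iq_step q h1 (n+2*s+2)
  rw [show n - 2*(-1-s) = n+2*s+2 by ring, show n + (2*(-1-s)+1) = n - 2*s - 1 by ring,
    show n + (2*s+1) = n+2*s+2-1 by ring, a1, a2,
    show 3*(-1-s)^2 + (-1-s) = 3*s^2+s + (2*s+2*s+2) by ring,
    show 4*s+2 = 2*s+2*s+2 by ring, show -1 - s = - (1+s) by ring, zpow_neg, ← inv_zpow,
    show (-1:ℂ)⁻¹ = -1 by norm_num, zpow_add₀ (by norm_num : (-1:ℂ) ≠ 0)]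
  simp only [zpow_add₀ h0, zpow_sub₀ h0, zpow_ofNat, zpow_one]
  have hx : q^n ≠ 0 := zpow_ne_zero _ h0
  have hy : q^(2*s) ≠ 0 := zpow_ne_zero _ h0
  generalize q^n = x at *
  generalize q^(2*s) = y at *
  field_simp
  ring

theorem S2t_rec (q : ℂ) (h0 : q ≠ 0) (h1 : ‖q‖ < 1) (n : ℤ) :
    ((1 - q ^ n) * (1 - q ^ (2*n+1))) * S2t q n = S2t q (n-1) := by
  apply telesc _ _ (fun s : ℤ => (-1)^s * q ^ (3*s^2 + s) * (q^n * (1 - q^(-(2*s))))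
    * iq q (n-2*s) * iq q (n+2*s)) _ (S2t_summ q n) (S2t_summ q (n-1))
  · apply summ_icc _ (-|n|-3) (|n|+3)
    have := abs_nonneg n
    have := le_abs_self n
    have := neg_abs_le n
    rintro r (h | h)
    · rw [iq_neg _ (n + 2*r) (by omega)]; simp
    · rw [iq_neg _ (n - 2*r) (by omega)]; simp
  · intro s
    have a1 := iq_step q h1 (n-2*s)
    have a2 := iq_step q h1 (n-2*s-1)
    have a3 := iq_step q h1 (n+2*s+2)
    have a4 := iq_step q h1 (n+2*s+1)
    rw [show n+2*s+2-1 = n+2*s+1 by ring] at a3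
    rw [show n+2*s+1-1 = n+2*s by ring] at a4
    rw [show n - 1 - 2*s = n - 2*s - 1 by ring, show n - 1 + 2*s+2 = n+2*s+1 by ring,
      show n - 2*(s+1) = n-2*s-1-1 by ring, show n + 2*(s+1) = n+2*s+2 by ring, a2, a1,
      a4, a3, show 3*(s+1)^2 + (s+1) = 3*s^2+s + (2*s+2*s+2*s) + 4 by ring,
      show 4*s+2 = 2*s+2*s+2 by ring, show 2*n+1 = n+n+1 by ring,
      show 2*(s+1) = 2*s+2 by ring, zpow_add₀ (by norm_num : (-1:ℂ) ≠ 0)]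
    simp only [zpow_add₀ h0, zpow_sub₀ h0, zpow_neg, zpow_ofNat]
    have hx : q^n ≠ 0 := zpow_ne_zero _ h0
    have hy : q^(2*s) ≠ 0 := zpow_ne_zero _ h0
    generalize q^n = x at *
    generalize q^(2*s) = y at *
    field_simp
    ring

theorem S2_rec (q : ℂ) (h0 : q ≠ 0) (h1 : ‖q‖ < 1) (n : ℤ) :
    ((1 - q ^ n) * (1 - q ^ (2*n+1))) * S2 q n = S2 q (n-1) := by
  have := S2t_rec q h0 h1 n
  rw [← S2_sym q h0 h1, ← S2_sym q h0 h1] at this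
  linear_combination this / 2

theorem S2_zero (q : ℂ) : S2 q 0 = 1 / (1 - q) := by
  unfold S2
  rw [tsum_eq_single 0]
  · have := iq_nat q 1
    simp only [Nat.cast_one] at this
    simp [iq_zero, this, qPoch]
  · intro r hr
    rcases lt_or_gt_of_ne hr with h | h
    · rw [iq_neg _ (0 + (2*r+1)) (by omega)]; simp
    · rw [iq_neg _ (0 - 2*r) (by omega)]; simp

theorem S2_neg (q : ℂ) (n : ℤ) (hn : n < 0) : S2 q n = 0 := by
  unfold S2
  refine (tsum_congr (fun r => ?_)).trans tsum_zero
  by_cases h : n - 2*r < 0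
  · rw [iq_neg _ (n - 2*r) h]; simp
  · rw [iq_neg _ (n + (2*r+1)) (by omega)]; simp

theorem S2_sum (q : ℂ) (h0 : q ≠ 0) (h1 : ‖q‖ < 1) :
    ∑' n : ℤ, q ^ (n^2+n) * S2 q n = (qPochInf (q^14) (q^14) * qPochInf (q^10) (q^14) *
      qPochInf (q^4) (q^14)) / qPochInf q q := by
  have h0' : 0 < ‖q‖ := norm_pos_iff.mpr h0
  have h7 : ‖q^7‖ < 1 := npow_lt h1 (by omega)
  have hm1 : ∀ r : ℤ, ‖(-1:ℂ)^r‖ = 1 := fun r => by rw [norm_zpow]; simp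
  have e1 : ∀ (k : ℕ) (r : ℤ), (q^k)^r = q^((k:ℤ)*r) := fun k r => by
    rw [zpow_mul, zpow_natCast]
  have hα : Summable (fun r : ℤ => ‖(-1) ^ r * q ^ (3*r^2 + r)‖) := by
    have s2 := summ_z ‖q‖ h0' h1 (fun r => 3*r^2+r) 1 (fun r => by
      nlinarith [sq_abs r, abs_nonneg r, neg_abs_le r, sq_nonneg (|r|-1)])
    refine Summable.of_nonneg_of_le (fun r => norm_nonneg _) (fun r => ?_) s2
    rw [norm_mul, hm1, one_mul, ← norm_zpow]
  have hb := bailey q h0 h1 _ hα (fun r => 2*r) 1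
  simp only [one_mul] at hb
  unfold S2
  rw [hb]
  congr 1
  have t1 := jtp (q^7) (-q^3) (pow_ne_zero _ h0) h7 (neg_ne_zero.mpr (pow_ne_zero _ h0))
  have c1 : -(-q^3 * q^7) = q^10 := by ring
  have c2 : -((-q^3)⁻¹ * q^7) = q^4 := by field_simp
  have c3 : (q^7)^2 = q^14 := by ring
  rw [c1, c2, c3] at t1
  rw [← t1]
  apply tsum_congr
  intro r
  rw [neg_eq_neg_one_mul (q^3), mul_zpow, e1, e1, mul_assoc, ← zpow_add₀ h0, mul_left_comm,
    ← zpow_add₀ h0]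
  congr 2
  push_cast; ring


theorem qpoch_split (a q : ℂ) (k N : ℕ) :
    qPoch a q (k*N) = ∏ j ∈ Finset.range k, qPoch (a * q^j) (q^k) N := by
  induction N with
  | zero => simp [qPoch]
  | succ n ih =>
    simp only [qpoch_succ]
    rw [Finset.prod_mul_distrib, ← ih]
    unfold qPoch
    rw [mul_add, mul_one, Finset.prod_range_add]
    congr 1
    apply Finset.prod_congr rfl
    intro j _
    rw [pow_add, pow_mul]; ring

theorem qinf_split (a q : ℂ) (h1 : ‖q‖ < 1) (k : ℕ) (hk : k ≠ 0) :
    qPochInf a q = ∏ j ∈ Finset.range k, qPochInf (a * q^j) (q^k) := by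
  have t1 : Tendsto (fun N : ℕ => qPoch a q (k*N)) atTop (𝓝 (qPochInf a q)) :=
    (qpoch_tendsto a q h1).comp (tendsto_id.const_mul_atTop' (Nat.pos_of_ne_zero hk))
  have t2 : Tendsto (fun N : ℕ => ∏ j ∈ Finset.range k, qPoch (a * q^j) (q^k) N) atTop
      (𝓝 (∏ j ∈ Finset.range k, qPochInf (a * q^j) (q^k))) :=
    tendsto_finsetProd _ (fun j _ => qpoch_tendsto _ _ (npow_lt h1 hk))
  simp only [← qpoch_split] at t2
  exact tendsto_nhds_unique t1 t2

theorem qinf_split2 (a q : ℂ) (h1 : ‖q‖ < 1) :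
    qPochInf a q = qPochInf a (q^2) * qPochInf (a*q) (q^2) := by
  rw [qinf_split a q h1 2 (by omega)]
  simp [Finset.prod_range_succ]

theorem qinf_mulneg (x q : ℂ) (h1 : ‖q‖ < 1) :
    qPochInf x q * qPochInf (-x) q = qPochInf (x^2) (q^2) := by
  have t1 := (qpoch_tendsto x q h1).mul (qpoch_tendsto (-x) q h1)
  have t2 := qpoch_tendsto (x^2) (q^2) (sq_lt h1)
  refine tendsto_nhds_unique t1 (t2.congr (fun n => ?_))
  unfold qPoch
  rw [← Finset.prod_mul_distrib]
  apply Finset.prod_congr rfl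
  intro k _
  ring

theorem A_eq (q : ℂ) (h1 : ‖q‖ < 1) : qPochInf (-q) (q^2) * J q 1 * J q 4 = (J q 2)^2 := by
  unfold J
  have a := qinf_split2 q q h1
  have b := qinf_mulneg q (q^2) (sq_lt h1)
  have c := qinf_split2 (q^2) (q^2) (sq_lt h1)
  rw [show (q^2)^2 = q^4 by ring, show q^2*q^2 = q^4 by ring] at c
  rw [show (q^2)^2 = q^4 by ring] at b
  rw [show q * q = q^2 by ring] at a
  rw [pow_one, a]
  linear_combination qPochInf (q^2) (q^2) * qPochInf (q^4) (q^4) * b - qPochInf (q^2) (q^2) * c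

theorem B_eq (q : ℂ) (h1 : ‖q‖ < 1) : qPochInf (-q^2) (q^2) * J q 2 = J q 4 := by
  unfold J
  have b := qinf_mulneg (q^2) (q^2) (sq_lt h1)
  rw [show (q^2)^2 = q^4 by ring] at b
  linear_combination b

theorem prod_even (q : ℂ) (h0 : q ≠ 0) (h1 : ‖q‖ < 1) :
    qPochInf (-q^7) (-q^7) * qPochInf (q^4) (-q^7) * qPochInf (-q^3) (-q^7) / J q 2
     = J q 14 * (J q 28)^5 / (Jam q 2 28 * Jam q 3 28 * Jam q 7 28 *
          Jam q 8 28 * Jam q 11 28 * Jam q 12 28) := by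
  have h7 : ‖-q^7‖ < 1 := by rw [norm_neg]; exact npow_lt h1 (by omega)
  have h14 : ‖q^14‖ < 1 := npow_lt h1 (by omega)
  have h28 : ‖q^28‖ < 1 := npow_lt h1 (by omega)
  have s1 := qinf_split2 (-q^7) (-q^7) h7
  have s2 := qinf_split2 (q^4) (-q^7) h7
  have s3 := qinf_split2 (-q^3) (-q^7) h7
  rw [show (-q^7)^2 = q^14 by ring] at s1 s2 s3
  rw [show -q^7 * -q^7 = q^14 by ring] at s1
  rw [show q^4 * -q^7 = -q^11 by ring] at s2
  rw [show -q^3 * -q^7 = q^10 by ring] at s3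
  have m3 := qinf_mulneg (q^3) (q^14) h14
  have m7 := qinf_mulneg (q^7) (q^14) h14
  have m11 := qinf_mulneg (q^11) (q^14) h14
  have d : ∀ k : ℕ, qPochInf (q^k) (q^14) = qPochInf (q^k) (q^28) * qPochInf (q^(k+14)) (q^28) := by
    intro k
    rw [qinf_split2 (q^k) (q^14) h14, ← pow_mul, ← pow_add]
  rw [← pow_mul, ← pow_mul] at m3 m7 m11
  rw [d] at m3 m7 m11
  have d4 := d 4
  have d10 := d 10
  have d14 := d 14
  have hJ2 := qinf_split (q^2) (q^2) (sq_lt h1) 14 (by omega)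
  simp only [← pow_mul, ← pow_add] at hJ2
  simp only [Finset.prod_range_succ, Finset.prod_range_zero] at hJ2
  unfold J Jam
  norm_num at m3 m7 m11 d4 d10 d14 hJ2 ⊢
  have nz : ∀ k : ℕ, k ≠ 0 → qPochInf (q^k) (q^28) ≠ 0 := fun k hk =>
    qpochInf_ne_zero' _ _ (npow_lt h1 hk) h28
  have n3 : qPochInf (-q^3) (q^14) = qPochInf (q^6) (q^28) /
      (qPochInf (q^3) (q^28) * qPochInf (q^17) (q^28)) := by
    rw [eq_div_iff (mul_ne_zero (nz 3 (by omega)) (nz 17 (by omega))), ← m3]; ring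
  have n7 : qPochInf (-q^7) (q^14) = qPochInf (q^14) (q^28) /
      (qPochInf (q^7) (q^28) * qPochInf (q^21) (q^28)) := by
    rw [eq_div_iff (mul_ne_zero (nz 7 (by omega)) (nz 21 (by omega))), ← m7]; ring
  have n11 : qPochInf (-q^11) (q^14) = qPochInf (q^22) (q^28) /
      (qPochInf (q^11) (q^28) * qPochInf (q^25) (q^28)) := by
    rw [eq_div_iff (mul_ne_zero (nz 11 (by omega)) (nz 25 (by omega))), ← m11]; ring
  rw [s1, s2, s3, n3, n7, n11, hJ2, d4, d10, d14]
  have := nz 2 (by omega)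
  have := nz 3 (by omega)
  have := nz 4 (by omega)
  have := nz 6 (by omega)
  have := nz 7 (by omega)
  have := nz 8 (by omega)
  have := nz 10 (by omega)
  have := nz 11 (by omega)
  have := nz 12 (by omega)
  have := nz 14 (by omega)
  have := nz 16 (by omega)
  have := nz 17 (by omega)
  have := nz 18 (by omega)
  have := nz 20 (by omega)
  have := nz 21 (by omega)
  have := nz 22 (by omega)
  have := nz 24 (by omega)
  have := nz 25 (by omega)
  have := nz 26 (by omega)
  have := nz 28 (by omega)
  field_simp

theorem Jam8 (q : ℂ) : Jam q 8 28 = qPochInf (q^28) (q^28) * qPochInf (q^20) (q^28) *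
    qPochInf (q^8) (q^28) := by
  unfold Jam
  norm_num
  ring


noncomputable def tm (q : ℂ) (i j k l : ℕ) : ℂ :=
  q ^ (((i:ℤ)^2 + (j:ℤ)^2 + (k:ℤ)^2 + (l:ℤ)^2 + (i:ℤ)*(l:ℤ) - (j:ℤ)*(l:ℤ) - (k:ℤ)*(l:ℤ)) : ℤ) /
          (qPoch (q ^ 2) (q ^ 2) i * qPoch (q ^ 2) (q ^ 2) j * qPoch (q ^ 2) (q ^ 2) k * qPoch (q ^ 2) (q ^ 2) l)

noncomputable def ee (q z : ℂ) (n : ℕ) : ℂ := q ^ ((n:ℤ)^2) * z ^ (n:ℤ) * iq (q^2) n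

theorem tm_eq (q : ℂ) (h0 : q ≠ 0) (i j k l : ℕ) :
    tm q i j k l = (q ^ ((l:ℤ)^2) * iq (q^2) l) *
      (ee q (q^(l:ℤ)) i * (ee q (q^(-(l:ℤ))) j * ee q (q^(-(l:ℤ))) k)) := by
  unfold tm ee
  rw [iq_nat, iq_nat, iq_nat, iq_nat,
    show (i:ℤ)^2 + (j:ℤ)^2 + (k:ℤ)^2 + (l:ℤ)^2 + (i:ℤ)*(l:ℤ) - (j:ℤ)*(l:ℤ) - (k:ℤ)*(l:ℤ)
    = (l:ℤ)^2 + ((i:ℤ)^2 + (l:ℤ) * i) + ((j:ℤ)^2 + (-(l:ℤ)) * j) + ((k:ℤ)^2 + (-(l:ℤ)) * k) by ring]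
  simp only [zpow_add₀ h0, ← zpow_mul]
  rw [div_eq_mul_one_div, one_div, mul_inv, mul_inv, mul_inv]
  simp only [one_div]
  ring

theorem tm_summ (q : ℂ) (h0 : q ≠ 0) (h1 : ‖q‖ < 1) :
    Summable (fun p : ℕ × ℕ × ℕ × ℕ => tm q p.1 p.2.1 p.2.2.1 p.2.2.2) := by
  have h0' : 0 < ‖q‖ := norm_pos_iff.mpr h0
  obtain ⟨K, hK, hb⟩ := iq_bdd (q^2) (sq_lt h1)
  obtain ⟨s, hs0, hs1, hs⟩ : ∃ s : ℝ, 0 < s ∧ s < 1 ∧ s^4 = ‖q‖ := by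
    refine ⟨√(√‖q‖), by positivity, ?_, ?_⟩
    · rw [Real.sqrt_lt' one_pos, one_pow, Real.sqrt_lt' one_pos, one_pow]; exact h1
    · rw [show 4 = 2 * 2 by norm_num, pow_mul, Real.sq_sqrt (by positivity),
        Real.sq_sqrt (by positivity)]
  have hg := summable_geometric_of_lt_one hs0.le hs1
  have hp : ∀ n : ℕ, 0 ≤ s^n := fun n => by positivity
  have h2 := hg.mul_of_nonneg hg hp hp
  have h3 := hg.mul_of_nonneg h2 hp (fun p => by positivity)
  have h4 := (hg.mul_of_nonneg h3 hp (fun p => by positivity)).mul_left (K*K*K*K)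
  refine Summable.of_norm_bounded h4 ?_
  rintro ⟨i, j, k, l⟩
  simp only
  have e : tm q i j k l = q ^ (((i:ℤ)^2 + (j:ℤ)^2 + (k:ℤ)^2 + (l:ℤ)^2 + (i:ℤ)*(l:ℤ)
      - (j:ℤ)*(l:ℤ) - (k:ℤ)*(l:ℤ)) : ℤ) *
      (iq (q^2) i * iq (q^2) j * iq (q^2) k * iq (q^2) l) := by
    unfold tm
    rw [iq_nat, iq_nat, iq_nat, iq_nat, div_eq_mul_inv, mul_inv, mul_inv, mul_inv]
    simp only [one_div]
  rw [e, norm_mul, norm_mul, norm_mul, norm_mul, norm_zpow, ← hs, ← zpow_natCast s 4, ← zpow_mul]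
  have hE : s ^ (((4:ℕ):ℤ) * ((i:ℤ)^2 + (j:ℤ)^2 + (k:ℤ)^2 + (l:ℤ)^2 + (i:ℤ)*(l:ℤ)
      - (j:ℤ)*(l:ℤ) - (k:ℤ)*(l:ℤ))) ≤ s ^ ((i:ℤ) + (j + (k + l))) := by
    apply zpow_le_zpow_right_of_le_one₀ hs0 hs1.le
    have hsq : ∀ n : ℕ, (n:ℤ) ≤ (n:ℤ)^2 := fun n => by exact_mod_cast Nat.le_self_pow (by omega) n
    have := hsq i
    have := hsq j
    have := hsq k
    have := hsq l
    have : 0 ≤ (i:ℤ)*(l:ℤ) := by positivity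
    push_cast
    nlinarith [sq_nonneg (3*(j:ℤ)-2*l), sq_nonneg (3*(k:ℤ)-2*l), sq_nonneg (i:ℤ), sq_nonneg (l:ℤ)]
  rw [zpow_add₀ hs0.ne', zpow_add₀ hs0.ne', zpow_add₀ hs0.ne', zpow_natCast, zpow_natCast,
    zpow_natCast, zpow_natCast] at hE
  calc _ ≤ (s^i * (s^j * (s^k * s^l))) * (K * K * K * K) := by
        gcongr <;> apply hb
    _ = _ := by ring

theorem ee_summ (q z : ℂ) (h0 : q ≠ 0) (h1 : ‖q‖ < 1) (hz : z ≠ 0) :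
    Summable (fun n => ‖ee q z n‖) := by
  have := (summ_EE q z h0 h1 hz 0).comp_injective (Nat.cast_injective (R := ℤ))
  simp only [add_zero] at this
  exact this

theorem ee_tsum (q z : ℂ) : ∑' n, ee q z n = EE q z := by
  unfold EE
  rw [tsum_int_nat _ (fun n hn => by rw [iq_neg _ n hn, mul_zero])]
  rfl

noncomputable def gg (q : ℂ) (l : ℕ) : ℂ :=
  (q ^ ((l:ℤ)^2) * iq (q^2) l) * (EE q (q^(l:ℤ)) * (EE q (q^(-(l:ℤ))) * EE q (q^(-(l:ℤ)))))

theorem main_sum (q : ℂ) (h0 : q ≠ 0) (h1 : ‖q‖ < 1) :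
    Summable (gg q) ∧ ∑' p : ℕ × ℕ × ℕ × ℕ, tm q p.1 p.2.1 p.2.2.1 p.2.2.2 = ∑' l, gg q l := by
  let e : ℕ × ℕ × ℕ × ℕ ≃ ℕ × ℕ × ℕ × ℕ :=
    { toFun := fun p => (p.2.1, p.2.2.1, p.2.2.2, p.1)
      invFun := fun p => (p.2.2.2, p.1, p.2.1, p.2.2.1)
      left_inv := fun p => rfl
      right_inv := fun p => rfl }
  have hs := e.summable_iff.mpr (tm_summ q h0 h1)
  have hin : ∀ l : ℕ, ∑' p : ℕ × ℕ × ℕ, tm q p.1 p.2.1 p.2.2 l = gg q l := by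
    intro l
    have z1 : q^(l:ℤ) ≠ 0 := zpow_ne_zero _ h0
    have z2 : q^(-(l:ℤ)) ≠ 0 := zpow_ne_zero _ h0
    have s1 := ee_summ q _ h0 h1 z1
    have s2 := ee_summ q _ h0 h1 z2
    have s3 := s2.mul_norm s2
    unfold gg
    rw [← ee_tsum, ← ee_tsum, tsum_mul_tsum_of_summable_norm s2 s2,
      tsum_mul_tsum_of_summable_norm s1 s3, ← tsum_mul_left]
    apply tsum_congr
    intro p
    rw [tm_eq q h0]
  constructor
  · have := hs.prod
    exact this.congr (fun l => hin l)
  · rw [← e.tsum_eq]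
    refine hs.tsum_prod.trans ?_
    exact tsum_congr hin

theorem even_lem (q : ℂ) (h0 : q ≠ 0) (h1 : ‖q‖ < 1) (m : ℕ) :
    EE q (q^(-(2*m:ℤ))) = q^(-(m:ℤ)^2) * qPoch (-q) (q^2) m * EE q 1 ∧
    EE q (q^(2*m:ℤ)) * EE q (q^(-(2*m:ℤ))) = q^(-(m:ℤ)^2) * (EE q 1)^2 := by
  induction m with
  | zero => simp [qpoch_zero]; ring
  | succ m ih =>
    obtain ⟨i1, i2⟩ := ih
    have r1 := EE_rec q (q^(-(2*(m+1:ℕ):ℤ))) h0 h1 (zpow_ne_zero _ h0)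
    have r2 := EE_rec q (q^(2*m:ℤ)) h0 h1 (zpow_ne_zero _ h0)
    rw [show q^(-(2*(m+1:ℕ):ℤ)) * q^2 = q^(-(2*m:ℤ)) by
      rw [← zpow_natCast q 2, ← zpow_add₀ h0]; congr 1 <;> push_cast <;> ring] at r1
    rw [show q^(2*m:ℤ) * q^2 = q^(2*(m+1:ℕ):ℤ) by
      rw [← zpow_natCast q 2, ← zpow_add₀ h0]; congr 1 <;> push_cast <;> ring] at r2
    have hx : q^(2*m:ℤ) ≠ 0 := zpow_ne_zero _ h0
    have e1 : q^(-(2*(m+1:ℕ):ℤ)) * q = (q^(2*m:ℤ) * q)⁻¹ := by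
      rw [← zpow_add_one₀ h0, ← zpow_add_one₀ h0, ← zpow_neg]; congr 1 <;> push_cast <;> ring
    have e2 : q^(-((m+1:ℕ):ℤ)^2) = q^(-(m:ℤ)^2) * (q^(2*m:ℤ) * q)⁻¹ := by
      rw [← zpow_add_one₀ h0, ← zpow_neg, ← zpow_add₀ h0]; congr 1 <;> push_cast <;> ring
    have e3 : (q^2)^m = q^(2*m:ℤ) := by rw [zpow_mul]; norm_cast
    have nz : 1 + q^(2*m:ℤ) * q ≠ 0 := by
      have := one_sub_ne (-q^(2*m+1)) (by rw [norm_neg]; exact npow_lt h1 (by omega))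
      rw [sub_neg_eq_add, pow_succ, pow_mul, e3] at this
      exact this
    rw [r1, e1, e2]
    rw [r2] at i2
    constructor
    · rw [i1, qpoch_succ, e3]
      field_simp
      ring
    · apply mul_left_cancel₀ nz
      have : (1 + q^(2*m:ℤ) * q) * (EE q (q^(2*(m+1:ℕ):ℤ)) * ((1 + (q^(2*m:ℤ) * q)⁻¹) *
        EE q (q^(-(2*m:ℤ))))) = (1 + (q^(2*m:ℤ) * q)⁻¹) * (q^(-(m:ℤ)^2) * (EE q 1)^2) := by
        rw [← i2]; ring
      rw [this]
      field_simp
      ring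

theorem odd_lem (q : ℂ) (h0 : q ≠ 0) (h1 : ‖q‖ < 1) (m : ℕ) :
    EE q (q^(-(2*m+1:ℤ))) = 2 * q^(-((m:ℤ)^2+m)) * qPoch (-q^2) (q^2) m * EE q q ∧
    EE q (q^(2*m+1:ℤ)) * EE q (q^(-(2*m+1:ℤ))) = 2 * q^(-((m:ℤ)^2+m)) * (EE q q)^2 := by
  induction m with
  | zero =>
    have r1 := EE_rec q (q⁻¹) h0 h1 (inv_ne_zero h0)
    rw [show q⁻¹ * q^2 = q by field_simp, inv_mul_cancel₀ h0] at r1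
    simp [qpoch_zero]
    rw [r1]
    constructor <;> ring
  | succ m ih =>
    obtain ⟨i1, i2⟩ := ih
    have r1 := EE_rec q (q^(-(2*(m+1:ℕ)+1:ℤ))) h0 h1 (zpow_ne_zero _ h0)
    have r2 := EE_rec q (q^(2*m+1:ℤ)) h0 h1 (zpow_ne_zero _ h0)
    rw [show q^(-(2*(m+1:ℕ)+1:ℤ)) * q^2 = q^(-(2*m+1:ℤ)) by
      rw [← zpow_natCast q 2, ← zpow_add₀ h0]; congr 1 <;> push_cast <;> ring] at r1
    rw [show q^(2*m+1:ℤ) * q^2 = q^(2*(m+1:ℕ)+1:ℤ) by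
      rw [← zpow_natCast q 2, ← zpow_add₀ h0]; congr 1 <;> push_cast <;> ring] at r2
    have hx : q^(2*m+1:ℤ) ≠ 0 := zpow_ne_zero _ h0
    have e1 : q^(-(2*(m+1:ℕ)+1:ℤ)) * q = (q^(2*m+1:ℤ) * q)⁻¹ := by
      rw [← zpow_add_one₀ h0, ← zpow_add_one₀ h0, ← zpow_neg]; congr 1 <;> push_cast <;> ring
    have e2 : q^(-(((m+1:ℕ):ℤ)^2+(m+1:ℕ))) = q^(-((m:ℤ)^2+m)) * (q^(2*m+1:ℤ) * q)⁻¹ := by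
      rw [← zpow_add_one₀ h0, ← zpow_neg, ← zpow_add₀ h0]; congr 1 <;> push_cast <;> ring
    have e3 : q^2 * (q^2)^m = q^(2*m+1:ℤ) * q := by
      rw [← zpow_add_one₀ h0, ← pow_succ', ← pow_mul, ← zpow_natCast]; congr 1 <;> push_cast <;> ring
    have nz : 1 + q^(2*m+1:ℤ) * q ≠ 0 := by
      have := one_sub_ne (-((q^2)^(m+1))) (by rw [norm_neg]; exact npow_lt (sq_lt h1) (by omega))
      rw [sub_neg_eq_add, pow_succ', e3] at this
      exact this
    rw [r1, e1, e2]
    rw [r2] at i2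
    constructor
    · rw [i1, qpoch_succ, neg_mul, e3]
      field_simp
      ring
    · apply mul_left_cancel₀ nz
      have : (1 + q^(2*m+1:ℤ) * q) * (EE q (q^(2*(m+1:ℕ)+1:ℤ)) * ((1 + (q^(2*m+1:ℤ) * q)⁻¹) *
        EE q (q^(-(2*m+1:ℤ))))) = (1 + (q^(2*m+1:ℤ) * q)⁻¹) * (2 * q^(-((m:ℤ)^2+m)) * (EE q q)^2) := by
        rw [← i2]; ring
      rw [this]
      field_simp
      ring

theorem b_even (q w : ℂ) (hw : w^2 = -q) (h0 : q ≠ 0) (h1 : ‖q‖ < 1) (h0w : w ≠ 0) (h1w : ‖w‖ < 1)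
    (m : ℕ) : 2 * (qPoch (-q) (q^2) m * iq (q^2) (2*m:ℕ)) = S1 w m := by
  induction m with
  | zero => simp [qpoch_zero, iq_zero, S1_zero]
  | succ m ih =>
    have hr := S1_rec w h0w h1w (m+1:ℕ)
    rw [show ((m+1:ℕ):ℤ) - 1 = m by push_cast; ring, ← ih] at hr
    have f1 : w^(8*(m+1:ℕ):ℤ) = (q^(2*m+2))^2 := by
      rw [show (8*(m+1:ℕ):ℤ) = ((2*(2*(2*m+2)) : ℕ):ℤ) by push_cast; ring, zpow_natCast, pow_mul, hw,
        neg_pow, pow_mul (-1:ℂ)]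
      simp [← pow_mul]; ring
    have f2 : w^(4*(m+1:ℕ)-2:ℤ) = -(q^(2*m+1)) := by
      rw [show (4*(m+1:ℕ)-2:ℤ) = ((2*(2*m+1) : ℕ):ℤ) by push_cast; ring, zpow_natCast, pow_mul, hw,
        neg_pow, pow_succ, pow_mul (-1:ℂ)]
      simp
    have n1 : 1 - (q^(2*m+2))^2 ≠ 0 := one_sub_ne _ (sq_lt (npow_lt h1 (by omega)))
    have n2 : 1 - q^(2*m+1) ≠ 0 := one_sub_ne _ (npow_lt h1 (by omega))
    rw [f1, f2, ← sub_eq_add_neg] at hr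
    apply mul_left_cancel₀ (mul_ne_zero n1 n2)
    rw [hr]
    have s1 := iq_step (q^2) (sq_lt h1) (2*(m+1):ℕ)
    have s2 := iq_step (q^2) (sq_lt h1) (2*m+1:ℕ)
    rw [show ((2*(m+1):ℕ):ℤ)-1 = (2*m+1:ℕ) by push_cast; ring] at s1
    rw [show ((2*m+1:ℕ):ℤ)-1 = (2*m:ℕ) by push_cast; ring, s1] at s2
    rw [s2, qpoch_succ, zpow_natCast, zpow_natCast]
    ring

theorem b_odd (Q : ℂ) (h0 : Q ≠ 0) (h1 : ‖Q‖ < 1)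
    (m : ℕ) : qPoch (-Q) Q m * iq Q (2*m+1:ℕ) = S2 Q m := by
  induction m with
  | zero => 
    have := iq_nat Q 1
    simp only [Nat.cast_one] at this
    simp [qpoch_zero, S2_zero, this]
    simp [qPoch]
  | succ m ih =>
    have hr := S2_rec Q h0 h1 (m+1:ℕ)
    rw [show ((m+1:ℕ):ℤ) - 1 = m by push_cast; ring, ← ih] at hr
    have f2 : Q^(2*(m+1:ℕ)+1:ℤ) = Q^(2*m+3) := by
      rw [← zpow_natCast]; congr 1 <;> push_cast <;> ring
    have n1 : 1 - Q^(m+1) ≠ 0 := one_sub_ne _ (npow_lt h1 (by omega))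
    have n2 : 1 - Q^(2*m+3) ≠ 0 := one_sub_ne _ (npow_lt h1 (by omega))
    rw [zpow_natCast, f2] at hr
    apply mul_left_cancel₀ (mul_ne_zero n1 n2)
    rw [hr]
    have s1 := iq_step Q h1 (2*(m+1)+1:ℕ)
    have s2 := iq_step Q h1 (2*m+2:ℕ)
    rw [show ((2*(m+1)+1:ℕ):ℤ)-1 = (2*m+2:ℕ) by push_cast; ring] at s1
    rw [show ((2*m+2:ℕ):ℤ)-1 = (2*m+1:ℕ) by push_cast; ring, s1] at s2
    rw [s2, qpoch_succ, zpow_natCast, zpow_natCast]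
    ring


theorem gg_even (q w : ℂ) (hw : w^2 = -q) (h0 : q ≠ 0) (h1 : ‖q‖ < 1) (h0w : w ≠ 0)
    (h1w : ‖w‖ < 1) (m : ℕ) :
    gg q (2*m) = (EE q 1)^3 / 2 * ((w^4)^((m:ℤ)^2) * S1 w m) := by
  obtain ⟨e1, e2⟩ := even_lem q h0 h1 m
  unfold gg
  rw [← b_even q w hw h0 h1 h0w h1w]
  have hm : ((2*m:ℕ):ℤ) = 2*m := by push_cast; ring
  have hx : q^((m:ℤ)^2) ≠ 0 := zpow_ne_zero _ h0
  have hp : q^(((2*m:ℕ):ℤ)^2) = (q^((m:ℤ)^2))^4 := by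
    rw [← zpow_natCast (q^((m:ℤ)^2)), ← zpow_mul, hm]; congr 1; push_cast; ring
  have hp2 : (w^4)^((m:ℤ)^2) = (q^((m:ℤ)^2))^2 := by
    rw [show w^4 = q^2 by rw [show w^4 = (w^2)^2 by ring, hw]; ring, ← zpow_natCast, ← zpow_natCast,
      ← zpow_mul, ← zpow_mul, mul_comm]
  have hp3 : q^(-(m:ℤ)^2) = (q^((m:ℤ)^2))⁻¹ := zpow_neg _ _
  rw [hp, hp2]
  rw [← mul_assoc (EE q _) (EE q _) (EE q _), hm, e2, e1, hp3]
  field_simp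

theorem gg_odd (q : ℂ) (h0 : q ≠ 0) (h1 : ‖q‖ < 1) (m : ℕ) :
    gg q (2*m+1) = 4 * q * (EE q q)^3 * ((q^2)^((m:ℤ)^2+m) * S2 (q^2) m) := by
  obtain ⟨e1, e2⟩ := odd_lem q h0 h1 m
  unfold gg
  rw [← b_odd (q^2) (pow_ne_zero _ h0) (sq_lt h1)]
  have hm : ((2*m+1:ℕ):ℤ) = 2*m+1 := by push_cast; ring
  have hx : q^((m:ℤ)^2+m) ≠ 0 := zpow_ne_zero _ h0
  have hp : q^(((2*m+1:ℕ):ℤ)^2) = (q^((m:ℤ)^2+m))^4 * q := by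
    rw [← zpow_natCast (q^((m:ℤ)^2+m)), ← zpow_mul, hm, ← zpow_add_one₀ h0]; congr 1; push_cast; ring
  have hp2 : (q^2)^((m:ℤ)^2+m) = (q^((m:ℤ)^2+m))^2 := by
    rw [← zpow_natCast, ← zpow_natCast, ← zpow_mul, ← zpow_mul, mul_comm]
  have hp3 : q^(-((m:ℤ)^2+m)) = (q^((m:ℤ)^2+m))⁻¹ := zpow_neg _ _
  rw [hp, hp2]
  rw [← mul_assoc (EE q _) (EE q _) (EE q _), hm, e2, e1, hp3]
  field_simp
  ring

theorem sum_even (q : ℂ) (h0 : q ≠ 0) (h1 : ‖q‖ < 1) :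
    ∑' m : ℕ, gg q (2*m) = (EE q 1)^3 * (J q 14 * (J q 28)^5/(Jam q 2 28 * Jam q 3 28 * Jam q 7 28 * Jam q 8 28 * Jam q 11 28 * Jam q 12 28)) := by
  obtain ⟨w, hw⟩ := IsAlgClosed.exists_pow_nat_eq (-q) (n := 2) (by norm_num)
  have h0w : w ≠ 0 := by
    rintro rfl
    apply h0
    simpa using hw.symm
  have h1w : ‖w‖ < 1 := by
    have : ‖w‖^2 < 1 := by rw [← norm_pow, hw, norm_neg]; exact h1
    by_contra h
    push Not at h
    nlinarith
  rw [tsum_congr (gg_even q w hw h0 h1 h0w h1w), tsum_mul_left,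
    ← tsum_int_nat (fun m : ℤ => (w^4)^(m^2) * S1 w m)
      (fun n hn => by rw [S1_neg _ n hn, mul_zero]),
    S1_sum w h0w h1w, ← prod_even q h0 h1]
  rw [show w^14 = (w^2)^7 by ring, show w^8 = (w^2)^4 by ring, show w^6 = (w^2)^3 by ring,
    show w^4 = (w^2)^2 by ring, hw, show (-q)^7 = -q^7 by ring, show (-q)^4 = q^4 by ring,
    show (-q)^3 = -q^3 by ring, show (-q)^2 = q^2 by ring]
  unfold J
  ring

theorem sum_odd (q : ℂ) (h0 : q ≠ 0) (h1 : ‖q‖ < 1) :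
    ∑' m : ℕ, gg q (2*m+1) = 4 * q * (EE q q)^3 * (Jam q 8 28 / J q 2) := by
  rw [tsum_congr (gg_odd q h0 h1), tsum_mul_left,
    ← tsum_int_nat (fun m : ℤ => (q^2)^(m^2+m) * S2 (q^2) m)
      (fun n hn => by rw [S2_neg _ n hn, mul_zero]),
    S2_sum (q^2) (pow_ne_zero _ h0) (sq_lt h1), Jam8]
  simp only [← pow_mul]
  rfl

theorem main_final (q : ℂ) (h0 : 0 < ‖q‖) (h1 : ‖q‖ < 1) :
    (∑' p : ℕ × ℕ × ℕ × ℕ, tm q p.1 p.2.1 p.2.2.1 p.2.2.2)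
    = (J q 2)^6 * J q 14 * (J q 28)^5 /
        ((J q 1)^3 * (J q 4)^3 * Jam q 2 28 * Jam q 3 28 * Jam q 7 28 *
          Jam q 8 28 * Jam q 11 28 * Jam q 12 28)
      + 4 * q * (J q 4)^3 * Jam q 8 28 / (J q 2)^4 := by
  have hq : q ≠ 0 := norm_pos_iff.mp h0
  have hJ : ∀ m : ℕ, m ≠ 0 → J q m ≠ 0 := fun m hm =>
    qpochInf_ne_zero' _ _ (npow_lt h1 hm) (npow_lt h1 hm)
  obtain ⟨hs, he⟩ := main_sum q hq h1
  have hA : EE q 1 = (J q 2)^2 / (J q 1 * J q 4) := by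
    rw [eq_div_iff (mul_ne_zero (hJ 1 (by norm_num)) (hJ 4 (by norm_num))), ← A_eq q h1,
      EE_eq q 1 hq h1 one_ne_zero, one_mul, mul_assoc]
  have hB : EE q q = J q 4 / J q 2 := by
    rw [eq_div_iff (hJ 2 (by norm_num)), ← B_eq q h1, EE_eq q q hq h1 hq, pow_two]
  rw [he, ← tsum_even_add_odd (hs.comp_injective (i := fun m : ℕ => 2*m) (fun a b h => by simpa using h))
    (hs.comp_injective (i := fun m : ℕ => 2*m+1) (fun a b h => by simpa using h)),
    sum_even q hq h1, sum_odd q hq h1, hA, hB]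
  congr 1
  · rw [div_pow, div_mul_div_comm]
    congr 1 <;> ring
  · have := hJ 2 (by norm_num)
    field_simp

theorem stmt_14 (q : ℂ) (h0 : 0 < ‖q‖) (h1 : ‖q‖ < 1) :
    (∑' p : ℕ × ℕ × ℕ × ℕ,
      (fun (i j k l : ℕ) =>
        q ^ (((i:ℤ)^2 + (j:ℤ)^2 + (k:ℤ)^2 + (l:ℤ)^2 + (i:ℤ)*(l:ℤ) - (j:ℤ)*(l:ℤ) - (k:ℤ)*(l:ℤ)) : ℤ) /
          (qPoch (q ^ 2) (q ^ 2) i * qPoch (q ^ 2) (q ^ 2) j * qPoch (q ^ 2) (q ^ 2) k * qPoch (q ^ 2) (q ^ 2) l))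
        p.1 p.2.1 p.2.2.1 p.2.2.2)
    = (J q 2)^6 * J q 14 * (J q 28)^5 /
        ((J q 1)^3 * (J q 4)^3 * Jam q 2 28 * Jam q 3 28 * Jam q 7 28 *
          Jam q 8 28 * Jam q 11 28 * Jam q 12 28)
      + 4 * q * (J q 4)^3 * Jam q 8 28 / (J q 2)^4 := by
  exact main_final q h0 h1
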